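/- Let τ ∈ iℝ_{>0}, so 0 < q = exp(2πiτ) < 1. Let λ ∈ ℝ, α, β ∈ 2ℤ_{>0} and ρ, σ ∈ ℝ_{≥3}. For x ∈ ℂ with |Re(x)| ≤ 2, define φ_λ(x) = ∫_0^1 [ Γ_{2τ}(−1/(2τ)+β+σ−iλ+x+y/τ)·Γ_{2τ}(−1−1/(2τ)+σ−iλ−x−y/τ) / ( Γ_{2τ}(−1/(2τ)+β+σ+iλ−x−y/τ)·Γ_{2τ}(1−1/(2τ)+σ+iλ+x+y/τ) ) ] × [ Γ_{2τ}(−1+1/(2τ)+α+ρ+iλ−y/τ)·Γ_{2τ}(1/(2τ)+ρ+iλ+y/τ) / ( Γ_{2τ}(1+1/(2τ)+α+ρ−iλ+y/τ)·Γ_{2τ}(1/(2τ)+ρ−iλ−y/τ) ) ] dy. Then φ_λ is analytic on the strip |Re(x)| ≤ 2, and for every x ∈ iℝ with q^{2x} ∉ {1, q^{2}, q^{−2}} it satisfies the second order difference equation B(x)·φ_λ(x+2) + C(x)·φ_λ(x) + D(x)·φ_λ(x−2) = E(λ;β)·φ_λ(x). -/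

import Mathlib

noncomputable section

open Complex MeasureTheory

/-- `q^u = exp(2πiτu)`. -/
def qpow (τ u : ℂ) : ℂ := Complex.exp (2 * (Real.pi : ℂ) * Complex.I * τ * u)

/-- The q-gamma type function `Γ_τ(x) = q^{−x²/16} / (−q^{(x+1)/2}; q)_∞`. -/
def qGamma (τ x : ℂ) : ℂ :=
  qpow τ (-(x ^ 2) / 16) / ∏' n : ℕ, (1 + qpow τ ((x + 1) / 2 + (n : ℂ)))

/-- The Askey-Wilson coefficient
`A(x) = (1−q^{a+x})(1−q^{b+x})(1−q^{c+x})(1−q^{d+x}) / ((1−q^{2x})(1−q^{2+2x}))`. -/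
def awA (τ a b c d x : ℂ) : ℂ :=
  ((1 - qpow τ (a + x)) * (1 - qpow τ (b + x)) * (1 - qpow τ (c + x)) * (1 - qpow τ (d + x))) /
    ((1 - qpow τ (2 * x)) * (1 - qpow τ (2 + 2 * x)))

/-- The coefficient `B(x)` of the gauged Askey-Wilson operator `L`. -/
def coefB (τ β a b x : ℂ) : ℂ :=
  qpow τ (-β) *
    ((1 - qpow τ (a + x)) * (1 - qpow τ (2 - a + x)) * (1 - qpow τ (b + x)) *
        (1 - qpow τ (2 - b + x))) /
    ((1 - qpow τ (2 * x)) * (1 - qpow τ (2 + 2 * x)))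

/-- The coefficient `D(x)` of the gauged Askey-Wilson operator `L`. -/
def coefD (τ β c d x : ℂ) : ℂ :=
  qpow τ (-β) *
    ((1 - qpow τ (c - x)) * (1 - qpow τ (2 - c - x)) * (1 - qpow τ (d - x)) *
        (1 - qpow τ (2 - d - x))) /
    ((1 - qpow τ (-(2 * x))) * (1 - qpow τ (2 - 2 * x)))

/-- The eigenvalue `E(λ;β) = −1 − q^{2−2β} + q^{1−β}(q^{2iλ}+q^{−2iλ})`. -/
def eigenE (τ lam β : ℂ) : ℂ :=
  -1 - qpow τ (2 - 2 * β) +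
    qpow τ (1 - β) * (qpow τ (2 * Complex.I * lam) + qpow τ (-(2 * Complex.I * lam)))

/-- The matrix coefficient `φ_λ(x)` given by the explicit integral (4.11) of the paper. -/
def phiMat (τ lam α ρ β σ x : ℂ) : ℂ :=
  ∫ y in (0 : ℝ)..1,
    (qGamma (2 * τ) (-(2 * τ)⁻¹ + β + σ - Complex.I * lam + x + (y : ℂ) / τ) *
          qGamma (2 * τ) (-1 - (2 * τ)⁻¹ + σ - Complex.I * lam - x - (y : ℂ) / τ) /
        (qGamma (2 * τ) (-(2 * τ)⁻¹ + β + σ + Complex.I * lam - x - (y : ℂ) / τ) *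
          qGamma (2 * τ) (1 - (2 * τ)⁻¹ + σ + Complex.I * lam + x + (y : ℂ) / τ))) *
      (qGamma (2 * τ) (-1 + (2 * τ)⁻¹ + α + ρ + Complex.I * lam - (y : ℂ) / τ) *
          qGamma (2 * τ) ((2 * τ)⁻¹ + ρ + Complex.I * lam + (y : ℂ) / τ) /
        (qGamma (2 * τ) (1 + (2 * τ)⁻¹ + α + ρ - Complex.I * lam + (y : ℂ) / τ) *
          qGamma (2 * τ) ((2 * τ)⁻¹ + ρ - Complex.I * lam - (y : ℂ) / τ)))

def cN1 (q X s r k g L : ℂ) : ℂ :=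
  q*X^3/L*(q*X*(s+1/s)-(r+1/r))*(X^2-q^2)-q*L*X^3*(q*(g+1/g)-X*(k+1/k))*(1-q^2*X^2)
def cNm (q X s r k g L : ℂ) : ℂ :=
  q^2*L*((s+1/s)-q*X*(r+1/r))*(X^2-q^2)-q^2*(X*(g+1/g)-q*(k+1/k))*(1-q^2*X^2)/L
def cN0 (q X s r k g L : ℂ) : ℂ :=
  q^2*X^2*(r+1/r)*(k+1/k)*(X^2-q^2)+q^2*X^2*(g+1/g)*(s+1/s)*(1-q^2*X^2)
    +X*(1/L^2-q^2*L^2)*(1-q^2*X^2)*(X^2-q^2)-q*X^3*(1-q^4)*(s+1/s)*(k+1/k)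
def cB (q X s r k : ℂ) : ℂ :=
  s/k*((1-q*r*s*X)*(1-q/(r*s)*X)*(1-q*s/r*X)*(1-q*r/s*X))*(X^2-q^2)
def cD (q X s k g : ℂ) : ℂ :=
  -(s/k*((1-q*g/k/X)*(1-q*k/g/X)*(1-q/(g*k)/X)*(1-q*g*k/X))*X^4*(1-q^2*X^2))
def cA (q X s r k g : ℂ) : ℂ :=
  (1-q*r*s*X)*(1-q*s/r*X)*(1-q*g/k*X)*(1-q/(g*k)*X)
def cE0 (q X s r k g L : ℂ) : ℂ :=
  ((q/(k*X)*s*cN1 q X s r k g L)*(1+s^2)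
    - (s^2/(r*k)*(cN0 q X s r k g L*(-q*r*L)+cN1 q X s r k g L*q^2*(1+r^2)) + cB q X s r k*(q*s*X/L)))/(q^2*s*L*X)
def cF0 (q X s r k g L : ℂ) : ℂ :=
  ((q/(k*X)*s*cN1 q X s r k g L)*(1+k^2)
    - (s/g)*(cN0 q X s r k g L*(-g/L)+cN1 q X s r k g L*(1+g^2)) + cD q X s k g*k*L*X)*(q*L)/(k*X)

theorem alg1 (q X z s r k g L : ℂ) (hq : q ≠ 0) (hX : X ≠ 0) (hz : z ≠ 0) (hs : s ≠ 0)
  (hr : r ≠ 0) (hk : k ≠ 0) (hg : g ≠ 0) (hL : L ≠ 0) :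
  s^2/(r*k)*(cN1 q X s r k g L*(q^2*z)+cN0 q X s r k g L+cNm q X s r k g L/(q^2*z))*((1-r/(q*L*z))*(1-q*r*L*z))
   - cB q X s r k*(s/k)*((1-k*L/(q*(X*z)))*(1-q*k*(X*z)/L))
   = ((1-q^2*s*L*(X*z))*(1-s/(q^2*L*(X*z))))*(s*cN1 q X s r k g L*q/(k*X)*z + cE0 q X s r k g L + cNm q X s r k g L*s*X/(k*q)/z) := by
  unfold cE0 cN1 cNm cN0 cB
  field_simp
  ring
theorem alg2 (q X z s r k g L : ℂ) (hq : q ≠ 0) (hX : X ≠ 0) (hz : z ≠ 0) (hs : s ≠ 0)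
  (hr : r ≠ 0) (hk : k ≠ 0) (hg : g ≠ 0) (hL : L ≠ 0) :
  s/g*(cN1 q X s r k g L*z+cN0 q X s r k g L+cNm q X s r k g L/z)*((1-g*z/L)*(1-g*L/z))
   + cD q X s k g*(k/s)*((1-s*L*(X*z))*(1-s/(L*(X*z))))
   = ((1-k*L*q/(X*z))*(1-k*(X*z)/(q*L)))*(s*cN1 q X s r k g L*q/(k*X)*z + cF0 q X s r k g L + cNm q X s r k g L*s*X/(k*q)/z) := by
  unfold cF0 cN1 cNm cN0 cD
  field_simp
  ring
theorem alg3 (q X s r k g L : ℂ) (hq : q ≠ 0) (hX : X ≠ 0) (hs : s ≠ 0)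
  (hr : r ≠ 0) (hk : k ≠ 0) (hg : g ≠ 0) (hL : L ≠ 0) :
  cE0 q X s r k g L - cF0 q X s r k g L =
   -cA q X s r k g * (X^2-q^2) + cA q (1/X) s r k g *X^4*(1-q^2*X^2)
   - (-1-q^2*s^2/k^2+q*s/k*(L^2+1/L^2))*((1-X^2)*(1-q^2*X^2)*(X^2-q^2)) := by
  unfold cE0 cF0 cN1 cN0 cD cB cA
  field_simp
  ring

theorem alg_abs (q X z s r k g n1 nm e0 f0 B D P1 P2 M1 T U V V2 N2 N0 : ℂ) (hs : s ≠ 0)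
    (hr : r ≠ 0) (hk : k ≠ 0) (hg : g ≠ 0) (Fp F0 Fm H2 H0 : ℂ)
    (hP1 : P1 ≠ 0) (hP2 : P2 ≠ 0) (hM1 : M1 ≠ 0)
    (hFp : Fp*P1 = s/k*M1*F0)
    (hFm : F0*T = s/k*P2*Fm)
    (hH : H2*V2 = g/r*U*H0)
    (h1 : s^2/(r*k)*N2*U - B*(s/k)*M1 = P1*(s*n1*q/(k*X)*z + e0 + nm*s*X/(k*q)/z))
    (h2 : s/g*N0*V + D*(k/s)*T = P2*(s*n1*q/(k*X)*z + f0 + nm*s*X/(k*q)/z)) :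
    B*(Fp*H0) + (e0 - f0)*(F0*H0) + D*(Fm*H0)
      = s/g*N2*V2*(Fp*H2)/M1 - s/g*N0*V*(F0*H0)/P2 := by
  have hFp' : Fp = s/k*M1*F0/P1 := by rw [eq_div_iff hP1, hFp]
  have hFm' : Fm = F0*T*(k/s)/P2 := by
    rw [eq_div_iff hP2, hFm]; field_simp
  have e1 : s/g*N2*V2*(Fp*H2)/M1 = s^2/(r*k)*N2*U*(F0*H0)/P1 := by
    calc s/g*N2*V2*(Fp*H2)/M1 = s/g*N2*Fp*(H2*V2)/M1 := by ring
      _ = _ := by rw [hH, hFp']; field_simp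
  have e2 : B*(Fp*H0) = B*(s/k)*M1*(F0*H0)/P1 := by rw [hFp']; ring
  have e3 : D*(Fm*H0) = D*(k/s)*T*(F0*H0)/P2 := by rw [hFm']; ring
  have e4 : s^2/(r*k)*N2*U*(F0*H0)/P1 - B*(s/k)*M1*(F0*H0)/P1
      = (F0*H0)*(s*n1*q/(k*X)*z + e0 + nm*s*X/(k*q)/z) := by
    rw [← sub_div, ← sub_mul, h1]; field_simp
  have e5 : s/g*N0*V*(F0*H0)/P2 + D*(k/s)*T*(F0*H0)/P2
      = (F0*H0)*(s*n1*q/(k*X)*z + f0 + nm*s*X/(k*q)/z) := by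
    rw [← add_div, ← add_mul, h2]; field_simp
  rw [e1, e2, e3]
  linear_combination e5 - e4


theorem alg_main (q X z s r k g L : ℂ) (hq : q ≠ 0) (hX : X ≠ 0) (hz : z ≠ 0) (hs : s ≠ 0)
    (hr : r ≠ 0) (hk : k ≠ 0) (hg : g ≠ 0) (hL : L ≠ 0) (Fp F0 Fm H2 H0 : ℂ)
    (hP1 : (1-q^2*s*L*(X*z))*(1-s/(q^2*L*(X*z))) ≠ 0)
    (hP2 : (1-k*L*q/(X*z))*(1-k*(X*z)/(q*L)) ≠ 0)
    (hM1 : (1-k*L/(q*(X*z)))*(1-q*k*(X*z)/L) ≠ 0)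
    (hFp : Fp*((1-q^2*s*L*(X*z))*(1-s/(q^2*L*(X*z))))
      = s/k*((1-k*L/(q*(X*z)))*(1-q*k*(X*z)/L))*F0)
    (hFm : F0*((1-s*L*(X*z))*(1-s/(L*(X*z))))
      = s/k*((1-k*L*q/(X*z))*(1-k*(X*z)/(q*L)))*Fm)
    (hH : H2*((1-g*(q^2*z)/L)*(1-g*L/(q^2*z))) = g/r*((1-r/(q*L*z))*(1-q*r*L*z))*H0) :
    cB q X s r k * (Fp*H0) + (cE0 q X s r k g L - cF0 q X s r k g L)*(F0*H0)
        + cD q X s k g * (Fm*H0) =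
      s/g*(cN1 q X s r k g L*(q^2*z)+cN0 q X s r k g L+cNm q X s r k g L/(q^2*z))
          *((1-g*(q^2*z)/L)*(1-g*L/(q^2*z)))*(Fp*H2)/((1-k*L/(q*(X*z)))*(1-q*k*(X*z)/L))
      - s/g*(cN1 q X s r k g L*z+cN0 q X s r k g L+cNm q X s r k g L/z)
          *((1-g*z/L)*(1-g*L/z))*(F0*H0)/((1-k*L*q/(X*z))*(1-k*(X*z)/(q*L))) := by
  exact alg_abs q X z s r k g _ _ _ _ _ _ _ _ _ _ _ _ _ _ _ hs hr hk hg _ _ _ _ _ hP1 hP2 hM1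
    hFp hFm hH (alg1 q X z s r k g L hq hX hz hs hr hk hg hL)
    (alg2 q X z s r k g L hq hX hz hs hr hk hg hL)

def Pq (p w : ℂ) : ℂ := ∏' n : ℕ, (1 - w * p ^ n)

theorem Pq_summable {p : ℂ} (hp : ‖p‖ < 1) (w : ℂ) : Summable fun n : ℕ => ‖-(w * p ^ n)‖ := by
  simpa using (summable_geometric_of_lt_one (norm_nonneg _) hp).mul_left ‖w‖

theorem Pq_succ {p : ℂ} (hp : ‖p‖ < 1) (w : ℂ) : Pq p w = (1 - w) * Pq p (w * p) := by
  have h : Multipliable fun n : ℕ => (1 - (w * p) * p ^ n) := by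
    have := multipliable_one_add_of_summable (Pq_summable hp (w*p))
    simpa only [sub_eq_add_neg] using this
  have h2 : (fun n : ℕ => (1 - (w * p) * p ^ n)) = fun n : ℕ => (1 - w * p ^ (n+1)) := by
    funext n
    rw [pow_succ' p n, mul_assoc]
  have h3 : Multipliable fun n : ℕ => (1 - w * p ^ (n+1)) := h2 ▸ h
  have h4 := tprod_eq_zero_mul' (f := fun n : ℕ => (1 - w * p ^ n)) h3
  unfold Pq
  rw [h4, h2]
  simp

theorem Pq_ne_zero {p w : ℂ} (hp : ‖p‖ < 1) (hw : ‖w‖ < 1) : Pq p w ≠ 0 := by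
  unfold Pq
  simp only [sub_eq_add_neg]
  refine tprod_one_add_ne_zero_of_summable (fun n hn => ?_) (Pq_summable hp w)
  have h1 : w * p ^ n = 1 := by linear_combination -hn
  have h2 : ‖w * p ^ n‖ < 1 := by
    rw [norm_mul, norm_pow]
    calc ‖w‖ * ‖p‖ ^ n ≤ ‖w‖ * 1 := by
          gcongr; exact pow_le_one₀ (norm_nonneg _) hp.le
      _ < 1 := by simpa using hw
  rw [h1] at h2
  simp at h2

theorem Pq_differentiable {p : ℂ} (hp : ‖p‖ < 1) : Differentiable ℂ (Pq p) := by
  intro w₀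
  have hb : HasProdLocallyUniformlyOn (fun (n : ℕ) (w : ℂ) => 1 + -(w * p ^ n))
      (fun w => ∏' n : ℕ, (1 + -(w * p ^ n))) (Metric.ball 0 (‖w₀‖ + 1)) := by
    refine Summable.hasProdLocallyUniformlyOn_nat_one_add (u := fun n => (‖w₀‖ + 1) * ‖p‖ ^ n)
      Metric.isOpen_ball
      ((summable_geometric_of_lt_one (norm_nonneg _) hp).mul_left _)
      (.of_forall fun n w hw => ?_) (fun n => by fun_prop)
    rw [norm_neg, norm_mul, norm_pow]
    gcongr
    simpa using (Metric.mem_ball.1 hw).le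
  have := hb.differentiableOn
    (.of_forall fun s => by simpa [Finset.prod_fn] using
      DifferentiableOn.finsetProd (fun _ _ ↦ by fun_prop)) Metric.isOpen_ball
  have h2 := this.differentiableAt (x := w₀) (Metric.isOpen_ball.mem_nhds (by simp))
  unfold Pq
  simpa only [sub_eq_add_neg] using h2

theorem qpow_ne (τ u : ℂ) : qpow τ u ≠ 0 := Complex.exp_ne_zero _

theorem qpow_norm_lt {t : ℝ} (ht : 0 < t) {τ : ℂ} (hτ : τ = I * (t : ℂ)) {u : ℂ} (hu : 0 < u.re) :
    ‖qpow τ u‖ < 1 := by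
  unfold qpow
  rw [Complex.norm_exp, Real.exp_lt_one_iff]
  have h : 2 * (Real.pi : ℂ) * I * τ * u = ((-(2 * Real.pi * t) : ℝ) : ℂ) * u := by
    rw [hτ]; push_cast; linear_combination 2 * Real.pi * t * u * Complex.I_mul_I
  rw [h, Complex.re_ofReal_mul]
  have : 0 < 2 * Real.pi * t * u.re := by positivity
  linarith

theorem one_sub_qpow_ne {t : ℝ} (ht : 0 < t) {τ : ℂ} (hτ : τ = I * (t : ℂ)) {u : ℂ}
    (hu : 0 < u.re) : 1 - qpow τ u ≠ 0 := by
  intro h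
  have h1 : qpow τ u = 1 := by linear_combination -h
  have h2 := qpow_norm_lt ht hτ hu
  rw [h1] at h2
  simp at h2

theorem qpow_differentiable (τ : ℂ) : Differentiable ℂ (qpow τ) := by
  unfold qpow; fun_prop

theorem qpow_add (τ u v : ℂ) : qpow τ (u + v) = qpow τ u * qpow τ v := by
  unfold qpow; rw [← Complex.exp_add]; congr 1; ring

theorem qpow_inv {τ : ℂ} (h : τ ≠ 0) : qpow τ (1 / τ) = 1 := by
  unfold qpow
  have : 2 * (Real.pi : ℂ) * I * τ * (1 / τ) = 2 * Real.pi * I := by field_simp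
  rw [this, Complex.exp_two_pi_mul_I]

theorem qpow_int_inv {τ : ℂ} (h : τ ≠ 0) (n : ℤ) : qpow τ ((n : ℂ) * (1 / τ)) = 1 := by
  unfold qpow
  have : 2 * (Real.pi : ℂ) * I * τ * (n * (1 / τ)) = n * (2 * Real.pi * I) := by field_simp
  rw [this, Complex.exp_int_mul_two_pi_mul_I]

theorem qpow_half_add {τ : ℂ} (h : τ ≠ 0) (u : ℂ) : qpow τ (u + (2 * τ)⁻¹) = - qpow τ u := by
  rw [qpow_add]
  have : qpow τ ((2 * τ)⁻¹) = -1 := by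
    unfold qpow
    have : 2 * (Real.pi : ℂ) * I * τ * (2 * τ)⁻¹ = Real.pi * I := by field_simp
    rw [this, Complex.exp_pi_mul_I]
  rw [this]; ring

theorem qGamma_eq (τ x : ℂ) :
    qGamma (2 * τ) x = qpow τ (-(x ^ 2) / 8) / Pq (qpow τ 2) (-qpow τ (x + 1)) := by
  unfold qGamma Pq
  congr 1
  · unfold qpow; congr 1; ring
  · refine tprod_congr fun n => ?_
    have : qpow (2 * τ) ((x + 1) / 2 + n) = qpow τ (x + 1) * qpow τ 2 ^ n := by
      unfold qpow; rw [← Complex.exp_nat_mul, ← Complex.exp_add]; congr 1; ring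
    rw [this]; ring

/-- Factor of the integrand depending on `u = x + v`. -/
def FF (τ l β σ u : ℂ) : ℂ :=
  qpow τ (-(β * u) / 2) *
    (Pq (qpow τ 2) (qpow τ (β + σ + l - u + 1)) * Pq (qpow τ 2) (qpow τ (2 + σ + l + u))) /
    (Pq (qpow τ 2) (qpow τ (1 + β + σ - l + u)) * Pq (qpow τ 2) (qpow τ (σ - l - u)))

/-- Factor of the integrand depending on `v` only. -/
def HH (τ l α ρ v : ℂ) : ℂ :=
  qpow τ (α * v / 2) *
    (Pq (qpow τ 2) (qpow τ (2 + α + ρ - l + v)) * Pq (qpow τ 2) (qpow τ (1 + ρ - l - v))) /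
    (Pq (qpow τ 2) (qpow τ (α + ρ + l - v)) * Pq (qpow τ 2) (qpow τ (1 + ρ + l + v)))

theorem FF_shift {t : ℝ} (ht : 0 < t) {τ : ℂ} (hτ : τ = I * (t : ℂ)) (l β σ u : ℂ)
    (h1 : 0 < (1 + β + σ - l + u).re) (h2 : 0 < (σ - l - u - 2).re) (h3 : 0 < (2 + σ + l + u).re) :
    FF τ l β σ (u + 2) * ((1 - qpow τ (2 + σ + l + u)) * (1 - qpow τ (σ - l - u - 2))) =
      qpow τ (-β) * ((1 - qpow τ (β + σ + l - u - 1)) * (1 - qpow τ (1 + β + σ - l + u)))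
        * FF τ l β σ u := by
  have hp : ‖qpow τ 2‖ < 1 := qpow_norm_lt ht hτ (by norm_num)
  have e1 := Pq_succ hp (qpow τ (β + σ + l - u - 1))
  have e2 := Pq_succ hp (qpow τ (2 + σ + l + u))
  have e3 := Pq_succ hp (qpow τ (1 + β + σ - l + u))
  have e4 := Pq_succ hp (qpow τ (σ - l - u - 2))
  have n3 := Pq_ne_zero hp (qpow_norm_lt ht hτ h1)
  have n4 := Pq_ne_zero hp (qpow_norm_lt ht hτ h2)
  have m2 := one_sub_qpow_ne ht hτ h3
  rw [← qpow_add] at e1 e2 e3 e4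
  unfold FF
  have a0 : qpow τ (-(β * (u + 2)) / 2) = qpow τ (-β) * qpow τ (-(β * u) / 2) := by
    rw [← qpow_add]; congr 1; ring
  rw [show β + σ + l - (u + 2) + 1 = β + σ + l - u - 1 by ring,
    show 2 + σ + l + (u + 2) = 2 + σ + l + u + 2 by ring,
    show 1 + β + σ - l + (u + 2) = 1 + β + σ - l + u + 2 by ring,
    show σ - l - (u + 2) = σ - l - u - 2 by ring, a0]
  rw [show β + σ + l - u - 1 + 2 = β + σ + l - u + 1 by ring] at e1
  rw [show σ - l - u - 2 + 2 = σ - l - u by ring] at e4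
  rw [e3] at n3 ⊢
  rw [e4] at n4 ⊢
  rw [e1, e2]
  have := left_ne_zero_of_mul n3
  have := right_ne_zero_of_mul n3
  have := left_ne_zero_of_mul n4
  have := right_ne_zero_of_mul n4
  field_simp

theorem HH_shift {t : ℝ} (ht : 0 < t) {τ : ℂ} (hτ : τ = I * (t : ℂ)) (l α ρ v : ℂ)
    (h1 : 0 < (1 + ρ + l + v).re) (h2 : 0 < (α + ρ + l - v - 2).re)
    (h3 : 0 < (2 + α + ρ - l + v).re) :
    HH τ l α ρ (v + 2) * ((1 - qpow τ (2 + α + ρ - l + v)) * (1 - qpow τ (α + ρ + l - v - 2))) =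
      qpow τ α * ((1 - qpow τ (ρ - 1 - l - v)) * (1 - qpow τ (1 + ρ + l + v)))
        * HH τ l α ρ v := by
  have hp : ‖qpow τ 2‖ < 1 := qpow_norm_lt ht hτ (by norm_num)
  have e1 := Pq_succ hp (qpow τ (ρ - 1 - l - v))
  have e2 := Pq_succ hp (qpow τ (2 + α + ρ - l + v))
  have e3 := Pq_succ hp (qpow τ (1 + ρ + l + v))
  have e4 := Pq_succ hp (qpow τ (α + ρ + l - v - 2))
  have n3 := Pq_ne_zero hp (qpow_norm_lt ht hτ h1)
  have n4 := Pq_ne_zero hp (qpow_norm_lt ht hτ h2)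
  have m2 := one_sub_qpow_ne ht hτ h3
  rw [← qpow_add] at e1 e2 e3 e4
  unfold HH
  have a0 : qpow τ (α * (v + 2) / 2) = qpow τ α * qpow τ (α * v / 2) := by
    rw [← qpow_add]; congr 1; ring
  rw [show 1 + ρ - l - (v + 2) = ρ - 1 - l - v by ring,
    show 2 + α + ρ - l + (v + 2) = 2 + α + ρ - l + v + 2 by ring,
    show 1 + ρ + l + (v + 2) = 1 + ρ + l + v + 2 by ring,
    show α + ρ + l - (v + 2) = α + ρ + l - v - 2 by ring, a0]
  rw [show ρ - 1 - l - v + 2 = 1 + ρ - l - v by ring] at e1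
  rw [show α + ρ + l - v - 2 + 2 = α + ρ + l - v by ring] at e4
  rw [e3] at n3 ⊢
  rw [e4] at n4 ⊢
  rw [e1, e2]
  have := left_ne_zero_of_mul n3
  have := right_ne_zero_of_mul n3
  have := left_ne_zero_of_mul n4
  have := right_ne_zero_of_mul n4
  field_simp

theorem FF_diff {t : ℝ} (ht : 0 < t) {τ : ℂ} (hτ : τ = I * (t : ℂ)) (l β σ u : ℂ)
    (h1 : 0 < (1 + β + σ - l + u).re) (h2 : 0 < (σ - l - u).re) :
    DifferentiableAt ℂ (FF τ l β σ) u := by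
  have hp : ‖qpow τ 2‖ < 1 := qpow_norm_lt ht hτ (by norm_num)
  have n3 := Pq_ne_zero hp (qpow_norm_lt ht hτ h1)
  have n4 := Pq_ne_zero hp (qpow_norm_lt ht hτ h2)
  have hP := Pq_differentiable hp
  have hQ := qpow_differentiable τ
  unfold FF
  refine DifferentiableAt.div ?_ ?_ (mul_ne_zero n3 n4) <;> fun_prop

theorem HH_diff {t : ℝ} (ht : 0 < t) {τ : ℂ} (hτ : τ = I * (t : ℂ)) (l α ρ v : ℂ)
    (h1 : 0 < (α + ρ + l - v).re) (h2 : 0 < (1 + ρ + l + v).re) :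
    DifferentiableAt ℂ (HH τ l α ρ) v := by
  have hp : ‖qpow τ 2‖ < 1 := qpow_norm_lt ht hτ (by norm_num)
  have n3 := Pq_ne_zero hp (qpow_norm_lt ht hτ h1)
  have n4 := Pq_ne_zero hp (qpow_norm_lt ht hτ h2)
  have hP := Pq_differentiable hp
  have hQ := qpow_differentiable τ
  unfold HH
  refine DifferentiableAt.div ?_ ?_ (mul_ne_zero n3 n4) <;> fun_prop

theorem qpow_per {τ : ℂ} (h : τ ≠ 0) {u v : ℂ} (e : ∃ n : ℤ, u = v + n * (1 / τ)) :
    qpow τ u = qpow τ v := by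
  obtain ⟨n, rfl⟩ := e
  rw [qpow_add, qpow_int_inv h, mul_one]

theorem FF_per {τ : ℂ} (h : τ ≠ 0) (n : ℤ) (l σ u : ℂ) :
    FF τ l (2 * n) σ (u + 1 / τ) = FF τ l (2 * n) σ u := by
  unfold FF
  congr 1
  · congr 1
    · exact qpow_per h ⟨-n, by push_cast; ring⟩
    · congr 2
      · exact qpow_per h ⟨-1, by push_cast; ring⟩
      · exact qpow_per h ⟨1, by push_cast; ring⟩
  · congr 2
    · exact qpow_per h ⟨1, by push_cast; ring⟩
    · exact qpow_per h ⟨-1, by push_cast; ring⟩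

theorem HH_per {τ : ℂ} (h : τ ≠ 0) (n : ℤ) (l ρ v : ℂ) :
    HH τ l (2 * n) ρ (v + 1 / τ) = HH τ l (2 * n) ρ v := by
  unfold HH
  congr 1
  · congr 1
    · exact qpow_per h ⟨n, by push_cast; ring⟩
    · congr 2
      · exact qpow_per h ⟨1, by push_cast; ring⟩
      · exact qpow_per h ⟨-1, by push_cast; ring⟩
  · congr 2
    · exact qpow_per h ⟨-1, by push_cast; ring⟩
    · exact qpow_per h ⟨1, by push_cast; ring⟩

theorem gauss_quot (e1 e2 e3 e4 p1 p2 p3 p4 : ℂ) :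
    e1 / p1 * (e2 / p2) / (e3 / p3 * (e4 / p4)) = e1 * e2 / (e3 * e4) * (p3 * p4 / (p1 * p2)) := by
  simp only [div_eq_mul_inv, mul_inv, inv_inv]; ring

theorem neg_qpow {τ : ℂ} (h : τ ≠ 0) {u v : ℂ} (e : v = u + (2 * τ)⁻¹ ∨ u = v + (2 * τ)⁻¹) :
    -qpow τ u = qpow τ v := by
  rcases e with rfl | rfl
  · rw [qpow_half_add h]
  · rw [qpow_half_add h, neg_neg]

/-- The constant in front of the integral. -/
def KK (τ l α ρ β σ : ℂ) : ℂ :=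
  qpow τ (-((β - 1 - 2 * l) * (1 - 2 * (2 * τ)⁻¹ + β + 2 * σ)
    + (-1 - β - 2 * l) * (-1 - 2 * (2 * τ)⁻¹ + β + 2 * σ)
    + (-1 + α + 2 * l) * (-1 + 2 * (2 * τ)⁻¹ + α + 2 * ρ)
    + (-1 - α + 2 * l) * (1 + 2 * (2 * τ)⁻¹ + α + 2 * ρ)) / 8)

theorem phiMat_eq {τ : ℂ} (h : τ ≠ 0) (lam α ρ β σ x : ℂ) :
    phiMat τ lam α ρ β σ x = KK τ (I * lam) α ρ β σ *
      ∫ y in (0 : ℝ)..1, FF τ (I * lam) β σ (x + (y : ℂ) / τ) * HH τ (I * lam) α ρ ((y : ℂ) / τ) := by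
  unfold phiMat
  rw [← intervalIntegral.integral_const_mul]
  refine intervalIntegral.integral_congr fun y _ => ?_
  simp only [qGamma_eq]
  generalize (y : ℂ) / τ = v
  generalize I * lam = l
  rw [gauss_quot, gauss_quot]
  unfold FF HH KK
  rw [neg_qpow h (u := -(2 * τ)⁻¹ + β + σ - l + x + v + 1) (v := 1 + β + σ - l + (x + v)) (.inl (by ring)),
    neg_qpow h (u := -1 - (2 * τ)⁻¹ + σ - l - x - v + 1) (v := σ - l - (x + v)) (.inl (by ring)),
    neg_qpow h (u := -(2 * τ)⁻¹ + β + σ + l - x - v + 1) (v := β + σ + l - (x + v) + 1) (.inl (by ring)),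
    neg_qpow h (u := 1 - (2 * τ)⁻¹ + σ + l + x + v + 1) (v := 2 + σ + l + (x + v)) (.inl (by ring)),
    neg_qpow h (u := -1 + (2 * τ)⁻¹ + α + ρ + l - v + 1) (v := α + ρ + l - v) (.inr (by ring)),
    neg_qpow h (u := (2 * τ)⁻¹ + ρ + l + v + 1) (v := 1 + ρ + l + v) (.inr (by ring)),
    neg_qpow h (u := 1 + (2 * τ)⁻¹ + α + ρ - l + v + 1) (v := 2 + α + ρ - l + v) (.inr (by ring)),
    neg_qpow h (u := (2 * τ)⁻¹ + ρ - l - v + 1) (v := 1 + ρ - l - v) (.inr (by ring))]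
  have key : ∀ A1 A2 A3 A4 B1 B2 B3 B4 κ f g : ℂ,
      A1 + A2 - (A3 + A4) + (B1 + B2 - (B3 + B4)) = κ + f + g →
      qpow τ A1 * qpow τ A2 / (qpow τ A3 * qpow τ A4) *
        (qpow τ B1 * qpow τ B2 / (qpow τ B3 * qpow τ B4)) = qpow τ κ * qpow τ f * qpow τ g := by
    intro A1 A2 A3 A4 B1 B2 B3 B4 κ f g e
    unfold qpow
    simp only [← Complex.exp_add, ← Complex.exp_sub]
    congr 1
    linear_combination (2 * (Real.pi : ℂ) * I * τ) * e
  rw [mul_mul_mul_comm, key _ _ _ _ _ _ _ _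
    (-((β - 1 - 2 * l) * (1 - 2 * (2 * τ)⁻¹ + β + 2 * σ)
    + (-1 - β - 2 * l) * (-1 - 2 * (2 * τ)⁻¹ + β + 2 * σ)
    + (-1 + α + 2 * l) * (-1 + 2 * (2 * τ)⁻¹ + α + 2 * ρ)
    + (-1 - α + 2 * l) * (1 + 2 * (2 * τ)⁻¹ + α + 2 * ρ)) / 8) (-(β * (x + v)) / 2) (α * v / 2)
    (by ring)]
  ring

/-- The vertical strip of analyticity. -/
def strip3 : Set ℂ := {u | -3 < u.re ∧ u.re < 3}

theorem strip3_open : IsOpen strip3 :=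
  (isOpen_lt continuous_const Complex.continuous_re).inter
    (isOpen_lt Complex.continuous_re continuous_const)

theorem integral_param_diff (F : ℂ → ℂ) (h w : ℝ → ℂ) (hF : DifferentiableOn ℂ F strip3)
    (hh : Continuous h) (hw : Continuous w) (hw0 : ∀ y, (w y).re = 0) :
    DifferentiableOn ℂ (fun x => ∫ y in (0 : ℝ)..1, F (x + w y) * h y) strip3 := by
  intro x₀ hx₀
  apply DifferentiableAt.differentiableWithinAt
  have hmem : ∀ x ∈ strip3, ∀ y, x + w y ∈ strip3 := by
    intro x hx y
    simp only [strip3, Set.mem_ofPred_eq, Complex.add_re, hw0, add_zero] at hx ⊢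
    exact hx
  have hF' : ContinuousOn (deriv F) strip3 := (hF.deriv strip3_open).continuousOn
  have hc : ∀ x ∈ strip3, Continuous fun y => F (x + w y) * h y := by
    intro x hx
    refine Continuous.mul ?_ hh
    exact hF.continuousOn.comp_continuous (by fun_prop) (hmem x hx)
  have hc' : ∀ x ∈ strip3, Continuous fun y => deriv F (x + w y) * h y := by
    intro x hx
    refine Continuous.mul ?_ hh
    exact hF'.comp_continuous (by fun_prop) (hmem x hx)
  obtain ⟨ε, hε, hball⟩ := Metric.nhds_basis_closedBall.mem_iff.1 (strip3_open.mem_nhds hx₀)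
  have hcont : ContinuousOn (fun z : ℂ × ℝ => deriv F (z.1 + w z.2) * h z.2)
      (Metric.closedBall x₀ ε ×ˢ Set.Icc (0 : ℝ) 1) := by
    refine ContinuousOn.mul ?_ (by fun_prop)
    refine hF'.comp (by fun_prop) ?_
    rintro ⟨x, y⟩ hz
    exact hmem x (hball hz.1) y
  obtain ⟨C, hC⟩ := ((isCompact_closedBall x₀ ε).prod isCompact_Icc).exists_bound_of_continuousOn hcont
  have := intervalIntegral.hasDerivAt_integral_of_dominated_loc_of_deriv_le (μ := volume)
    (a := (0 : ℝ)) (b := 1) (F := fun x y => F (x + w y) * h y)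
    (F' := fun x y => deriv F (x + w y) * h y) (x₀ := x₀) (bound := fun _ => C)
    (Metric.closedBall_mem_nhds x₀ hε)
    (by
      filter_upwards [strip3_open.mem_nhds hx₀] with x hx
      exact (hc x hx).aestronglyMeasurable)
    ((hc x₀ hx₀).intervalIntegrable _ _)
    ((hc' x₀ hx₀).aestronglyMeasurable)
    (by
      refine Filter.Eventually.of_forall fun y hy x hx => ?_
      rw [Set.uIoc_of_le zero_le_one] at hy
      exact hC (x, y) ⟨hx, hy.1.le, hy.2⟩)
    (by simp)
    (by
      refine Filter.Eventually.of_forall fun y hy x hx => ?_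
      have hd : DifferentiableAt ℂ F (x + w y) :=
        hF.differentiableAt (strip3_open.mem_nhds (hmem x (hball hx) y))
      exact (hd.hasDerivAt.comp_add_const x (w y)).mul_const (h y))
  exact this.2.differentiableAt

theorem integral_shift (G : ℂ → ℂ) {t : ℝ} (ht : 0 < t) {τ : ℂ} (hτ : τ = I * (t : ℂ))
    (hG : ∀ v : ℂ, 0 ≤ v.re → v.re ≤ 2 → DifferentiableAt ℂ G v)
    (hper : ∀ v, G (v + 1 / τ) = G v) :
    ∫ y in (0 : ℝ)..1, G ((y : ℂ) / τ + 2) = ∫ y in (0 : ℝ)..1, G ((y : ℂ) / τ) := by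
  have htc : (t : ℂ) ≠ 0 := by exact_mod_cast ht.ne'
  have hτ0 : τ ≠ 0 := by rw [hτ]; exact mul_ne_zero Complex.I_ne_zero htc
  have hre : ∀ w : ℂ, (w / τ).re = w.im / t := by
    intro w
    have : w / τ = (w * -I) / (t : ℂ) := by
      rw [hτ]; field_simp; linear_combination w * Complex.I_mul_I
    rw [this, Complex.div_ofReal_re]
    simp
  have := Complex.integral_boundary_rect_eq_zero_of_differentiableOn (fun w => G (w / τ)) 0
    (1 + (2 * t : ℝ) * I) (by
      intro w hw
      apply DifferentiableAt.differentiableWithinAt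
      have him : 0 ≤ w.im ∧ w.im ≤ 2 * t := by
        have := hw.2
        simp only [Set.mem_preimage] at this
        rw [Set.uIcc_of_le (by simp; positivity)] at this
        simpa using this
      have hd : DifferentiableAt ℂ G (w / τ) := by
        refine hG _ ?_ ?_
        · rw [hre]; exact div_nonneg him.1 ht.le
        · rw [hre, div_le_iff₀ ht]; exact him.2
      exact hd.comp w (by fun_prop))
  have e1 : ∀ y : ℝ, ((1 : ℂ) + y * I) / τ = (0 + y * I) / τ + 1 / τ := by intro y; ring
  have e2 : ∀ y : ℝ, ((y : ℂ) + (2 * t) * I) / τ = y / τ + 2 := by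
    intro y; rw [hτ]; field_simp
  simp at this
  simp only [e2] at this
  have e3 : ∀ y : ℝ, G (((1 : ℂ) + y * I) / τ) = G (y * I / τ) := by
    intro y; rw [e1, hper]; simp
  simp only [e3] at this
  linear_combination -this

theorem main_integral {t : ℝ} (ht : 0 < t) {τ : ℂ} (hτ : τ = I * (t : ℂ)) (l ρ σ x : ℂ)
    (m n : ℤ) (α β : ℂ) (hα : α = 2 * (m : ℂ)) (hβ : β = 2 * (n : ℂ)) (hα2 : 2 ≤ α.re)
    (hβ2 : 2 ≤ β.re) (hl : l.re = 0) (hρ : 3 ≤ ρ.re) (hσ : 3 ≤ σ.re) (hx : x.re = 0)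
    (J : ℂ → ℂ) (hJ : ∀ x, J x = ∫ y in (0 : ℝ)..1, FF τ l β σ (x + (y : ℂ) / τ) * HH τ l α ρ ((y : ℂ) / τ))
    (q X s r k g L : ℂ) (hq : q = qpow τ 1) (hX : X = qpow τ x) (hs : s = qpow τ σ)
    (hr : r = qpow τ ρ) (hk : k = qpow τ (β + σ)) (hg : g = qpow τ (α + ρ)) (hL : L = qpow τ l) :
    cB q X s r k * J (x + 2) + (cE0 q X s r k g L - cF0 q X s r k g L) * J x
      + cD q X s k g * J (x - 2) = 0 := by
  have htc : (t : ℂ) ≠ 0 := by exact_mod_cast ht.ne'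
  have hτ0 : τ ≠ 0 := by rw [hτ]; exact mul_ne_zero Complex.I_ne_zero htc
  have hre : ∀ y : ℝ, ((y : ℂ) / τ).re = 0 := by
    intro w
    have : (w : ℂ) / τ = ((w / t : ℝ) : ℂ) * -I := by
      rw [hτ]; push_cast; field_simp; linear_combination w * Complex.I_mul_I
    rw [this, Complex.re_ofReal_mul]
    simp
  have hFd : ∀ u : ℂ, -3 < u.re → u.re < 3 → DifferentiableAt ℂ (FF τ l β σ) u := by
    intro u h1 h2
    refine FF_diff ht hτ _ _ _ _ ?_ ?_ <;> simp [hl] <;> linarith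
  have hHd : ∀ u : ℂ, -3 < u.re → u.re < 3 → DifferentiableAt ℂ (HH τ l α ρ) u := by
    intro u h1 h2
    refine HH_diff ht hτ _ _ _ _ ?_ ?_ <;> simp [hl] <;> linarith
  let N : ℂ → ℂ := fun v => cN1 q X s r k g L * qpow τ v + cN0 q X s r k g L
    + cNm q X s r k g L / qpow τ v
  let G : ℂ → ℂ := fun v => s / g * N v *
    ((1 - qpow τ (α + ρ - l + v)) * (1 - qpow τ (α + ρ + l - v))) *
    (FF τ l β σ (x + v) * HH τ l α ρ v) /
    ((1 - qpow τ (β + σ + l - (x + v) + 1)) * (1 - qpow τ (-1 + β + σ - l + (x + v))))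
  have hQ := qpow_differentiable τ
  have hGd : ∀ v : ℂ, 0 ≤ v.re → v.re ≤ 2 → DifferentiableAt ℂ G v := by
    intro v h1 h2
    have d1 : DifferentiableAt ℂ (fun v => FF τ l β σ (x + v)) v := by
      refine DifferentiableAt.comp v (hFd (x + v) ?_ ?_) (by fun_prop) <;> simp [hx] <;> linarith
    have d2 := hHd v (by linarith) (by linarith)
    have d3 : DifferentiableAt ℂ N v := by
      refine DifferentiableAt.add (by fun_prop) ?_
      exact DifferentiableAt.div (by fun_prop) (by fun_prop) (qpow_ne _ _)
    refine DifferentiableAt.div (by fun_prop) (by fun_prop) (mul_ne_zero ?_ ?_)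
    · refine one_sub_qpow_ne ht hτ ?_
      simp [hl, hx]; linarith
    · refine one_sub_qpow_ne ht hτ ?_
      simp [hl, hx]; linarith
  have hGper : ∀ v, G (v + 1 / τ) = G v := by
    intro v
    simp only [G, N]
    rw [← add_assoc x v]
    rw [show FF τ l β σ (x + v + 1 / τ) = FF τ l β σ (x + v) by rw [hβ]; exact FF_per hτ0 _ _ _ _,
      show HH τ l α ρ (v + 1 / τ) = HH τ l α ρ v by rw [hα]; exact HH_per hτ0 _ _ _ _,
      qpow_per hτ0 (u := v + 1 / τ) (v := v) ⟨1, by push_cast; ring⟩,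
      qpow_per hτ0 (u := α + ρ - l + (v + 1 / τ)) (v := α + ρ - l + v) ⟨1, by push_cast; ring⟩,
      qpow_per hτ0 (u := α + ρ + l - (v + 1 / τ)) (v := α + ρ + l - v) ⟨-1, by push_cast; ring⟩,
      qpow_per hτ0 (u := β + σ + l - (x + v + 1 / τ) + 1) (v := β + σ + l - (x + v) + 1)
        ⟨-1, by push_cast; ring⟩,
      qpow_per hτ0 (u := -1 + β + σ - l + (x + v + 1 / τ)) (v := -1 + β + σ - l + (x + v))
        ⟨1, by push_cast; ring⟩]
  have hpt : ∀ v : ℂ, v.re = 0 →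
      cB q X s r k * (FF τ l β σ (x + 2 + v) * HH τ l α ρ v)
        + (cE0 q X s r k g L - cF0 q X s r k g L) * (FF τ l β σ (x + v) * HH τ l α ρ v)
        + cD q X s k g * (FF τ l β σ (x - 2 + v) * HH τ l α ρ v) = G (v + 2) - G v := by
    intro v hv
    have f1 := FF_shift ht hτ l β σ (x + v) (by simp [hl, hx, hv]; linarith)
      (by simp [hl, hx, hv]; linarith) (by simp [hl, hx, hv]; linarith)
    have f2 := FF_shift ht hτ l β σ (x - 2 + v) (by simp [hl, hx, hv]; linarith)
      (by simp [hl, hx, hv]; linarith) (by simp [hl, hx, hv]; linarith)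
    have f3 := HH_shift ht hτ l α ρ v (by simp [hl, hv]; linarith)
      (by simp [hl, hv]; linarith) (by simp [hl, hv]; linarith)
    have g1 : 1 - qpow τ (2 + σ + l + (x + v)) ≠ 0 :=
      one_sub_qpow_ne ht hτ (by simp [hl, hx, hv]; linarith)
    have g2 : 1 - qpow τ (σ - l - (x + v) - 2) ≠ 0 :=
      one_sub_qpow_ne ht hτ (by simp [hl, hx, hv]; linarith)
    have g3 : 1 - qpow τ (β + σ + l - (x + v) + 1) ≠ 0 :=
      one_sub_qpow_ne ht hτ (by simp [hl, hx, hv]; linarith)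
    have g4 : 1 - qpow τ (-1 + β + σ - l + (x + v)) ≠ 0 :=
      one_sub_qpow_ne ht hτ (by simp [hl, hx, hv]; linarith)
    have g5 : 1 - qpow τ (β + σ + l - (x + v) - 1) ≠ 0 :=
      one_sub_qpow_ne ht hτ (by simp [hl, hx, hv]; linarith)
    have g6 : 1 - qpow τ (1 + β + σ - l + (x + v)) ≠ 0 :=
      one_sub_qpow_ne ht hτ (by simp [hl, hx, hv]; linarith)
    have cv : qpow τ (2 + σ + l + (x + v)) = q^2*s*L*(X*qpow τ v) ∧
        qpow τ (σ - l - (x + v) - 2) = s/(q^2*L*(X*qpow τ v)) ∧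
        qpow τ (β + σ + l - (x + v) + 1) = k*L*q/(X*qpow τ v) ∧
        qpow τ (-1 + β + σ - l + (x + v)) = k*(X*qpow τ v)/(q*L) ∧
        qpow τ (β + σ + l - (x + v) - 1) = k*L/(q*(X*qpow τ v)) ∧
        qpow τ (1 + β + σ - l + (x + v)) = q*k*(X*qpow τ v)/L ∧
        qpow τ (2 + σ + l + (x - 2 + v)) = s*L*(X*qpow τ v) ∧
        qpow τ (σ - l - (x - 2 + v) - 2) = s/(L*(X*qpow τ v)) ∧
        qpow τ (β + σ + l - (x - 2 + v) - 1) = k*L*q/(X*qpow τ v) ∧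
        qpow τ (1 + β + σ - l + (x - 2 + v)) = k*(X*qpow τ v)/(q*L) ∧
        qpow τ (-β) = s/k ∧ qpow τ α = g/r ∧
        qpow τ (2 + α + ρ - l + v) = g*(q^2*qpow τ v)/L ∧
        qpow τ (α + ρ + l - v - 2) = g*L/(q^2*qpow τ v) ∧
        qpow τ (ρ - 1 - l - v) = r/(q*L*qpow τ v) ∧
        qpow τ (1 + ρ + l + v) = q*r*L*qpow τ v ∧
        qpow τ (α + ρ - l + v) = g*qpow τ v/L ∧
        qpow τ (α + ρ + l - v) = g*L/qpow τ v ∧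
        qpow τ (v + 2) = q^2*qpow τ v := by
      subst hq hX hs hr hk hg hL
      refine ⟨?_, ?_, ?_, ?_, ?_, ?_, ?_, ?_, ?_, ?_, ?_, ?_, ?_, ?_, ?_, ?_, ?_, ?_, ?_⟩ <;>
      · simp only [qpow, ← Complex.exp_nat_mul, ← Complex.exp_add, ← Complex.exp_sub]
        congr 1
        push_cast
        ring
    obtain ⟨v1, v2, v3, v4, v5, v6, v7, v8, v9, v10, v11, v12, v13, v14, v15, v16, v17, v18, v19⟩ := cv
    rw [v1, v2, v5, v6, v11] at f1
    rw [v7, v8, v9, v10, v11] at f2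
    rw [v13, v14, v15, v16, v12] at f3
    rw [v1] at g1
    rw [v2] at g2
    rw [v3] at g3
    rw [v4] at g4
    rw [v5] at g5
    rw [v6] at g6
    have E1 : x + 2 + v = x + v + 2 := by ring
    have E2 : x - 2 + v + 2 = x + v := by ring
    rw [E2] at f2
    rw [E1]
    have := alg_main q X (qpow τ v) s r k g L (hq ▸ qpow_ne _ _) (hX ▸ qpow_ne _ _) (qpow_ne _ _)
      (hs ▸ qpow_ne _ _) (hr ▸ qpow_ne _ _) (hk ▸ qpow_ne _ _) (hg ▸ qpow_ne _ _)
      (hL ▸ qpow_ne _ _) _ _ _ _ _ (mul_ne_zero g1 g2) (mul_ne_zero g3 g4) (mul_ne_zero g5 g6)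
      f1 f2 f3
    rw [this]
    simp only [G, N]
    rw [show α + ρ - l + (v + 2) = 2 + α + ρ - l + v by ring,
      show α + ρ + l - (v + 2) = α + ρ + l - v - 2 by ring,
      show β + σ + l - (x + (v + 2)) + 1 = β + σ + l - (x + v) - 1 by ring,
      show -1 + β + σ - l + (x + (v + 2)) = 1 + β + σ - l + (x + v) by ring,
      show x + (v + 2) = x + v + 2 by ring,
      v13, v14, v5, v6, v17, v18, v3, v4, v19]
  have hFc : ∀ x' : ℂ, -3 < x'.re → x'.re < 3 → Continuous fun y : ℝ =>
      FF τ l β σ (x' + (y : ℂ) / τ) * HH τ l α ρ ((y : ℂ) / τ) := by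
    intro x' h1 h2
    rw [continuous_iff_continuousAt]
    intro y
    have c1 : ContinuousAt (FF τ l β σ) (x' + (y : ℂ) / τ) :=
      (hFd _ (by simp [hre, h1]) (by simp [hre, h2])).continuousAt
    have c2 : ContinuousAt (HH τ l α ρ) ((y : ℂ) / τ) :=
      (hHd _ (by simp [hre]) (by simp [hre])).continuousAt
    have c3 : ContinuousAt (fun y : ℝ => x' + (y : ℂ) / τ) y := by fun_prop
    have c4 : ContinuousAt (fun y : ℝ => (y : ℂ) / τ) y := by fun_prop
    exact (ContinuousAt.comp (f := fun y : ℝ => x' + (y : ℂ) / τ) c1 c3).mul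
      (ContinuousAt.comp (f := fun y : ℝ => (y : ℂ) / τ) c2 c4)
  have hGc : ∀ w : ℂ, 0 ≤ w.re → w.re ≤ 2 → Continuous fun y : ℝ => G ((y : ℂ) / τ + w) := by
    intro w h1 h2
    rw [continuous_iff_continuousAt]
    intro y
    have c1 : ContinuousAt G ((y : ℂ) / τ + w) :=
      (hGd _ (by simp [hre, h1]) (by simp [hre, h2])).continuousAt
    exact ContinuousAt.comp (f := fun y : ℝ => (y : ℂ) / τ + w) c1 (by fun_prop)
  have hG0 : Continuous fun y : ℝ => G ((y : ℂ) / τ) := by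
    simpa using hGc 0 (by simp) (by simp)
  have i1 := (hFc (x + 2) (by simp [hx]; norm_num) (by simp [hx]; norm_num)).intervalIntegrable (μ := volume) 0 1
  have i2 := (hFc x (by simp [hx]) (by simp [hx])).intervalIntegrable (μ := volume) 0 1
  have i3 := (hFc (x - 2) (by simp [hx]; norm_num) (by simp [hx]; norm_num)).intervalIntegrable (μ := volume) 0 1
  have i4 := (hGc 2 (by simp) (by simp)).intervalIntegrable (μ := volume) 0 1
  have i5 := hG0.intervalIntegrable (μ := volume) 0 1
  rw [hJ, hJ, hJ, ← intervalIntegral.integral_const_mul, ← intervalIntegral.integral_const_mul,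
    ← intervalIntegral.integral_const_mul,
    ← intervalIntegral.integral_add (i1.const_mul _) (i2.const_mul _),
    ← intervalIntegral.integral_add ((i1.const_mul _).add (i2.const_mul _)) (i3.const_mul _)]
  rw [intervalIntegral.integral_congr (g := fun y : ℝ => G ((y : ℂ) / τ + 2) - G ((y : ℂ) / τ))
    (fun y _ => hpt _ (hre y)), intervalIntegral.integral_sub i4 i5,
    integral_shift G ht hτ hGd hGper, sub_self]

theorem fin_abs (b a1 a2 d E Δ Jp J0 Jm K : ℂ) (hΔ : Δ ≠ 0)
    (key : b*Jp + (-a1 + a2 - E*Δ)*J0 + d*Jm = 0) :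
    b/Δ*(K*Jp) + (-(a1/Δ) - -a2/Δ)*(K*J0) + d/Δ*(K*Jm) = E*(K*J0) := by
  have h : b/Δ*(K*Jp) + (-(a1/Δ) - -a2/Δ)*(K*J0) + d/Δ*(K*Jm)
      = K * (b*Jp + (-a1 + a2)*J0 + d*Jm) / Δ := by ring
  rw [h, div_eq_iff hΔ]
  linear_combination K * key

theorem final_alg (q X s r k g L Jp J0 Jm K : ℂ) (hq : q ≠ 0) (hX : X ≠ 0) (hs : s ≠ 0)
    (hr : r ≠ 0) (hk : k ≠ 0) (hg : g ≠ 0) (hL : L ≠ 0)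
    (hx1 : X ^ 2 ≠ 1) (hx2 : X ^ 2 ≠ q ^ 2) (hx3 : X ^ 2 ≠ 1 / q ^ 2)
    (key : cB q X s r k * Jp + (-cA q X s r k g * (X^2-q^2)
      + cA q (1/X) s r k g *X^4*(1-q^2*X^2)
      - (-1-q^2*s^2/k^2+q*s/k*(L^2+1/L^2))*((1-X^2)*(1-q^2*X^2)*(X^2-q^2))) * J0
      + cD q X s k g * Jm = 0) :
    s / k * ((1 - q * r * s * X) * (1 - q / (r * s) * X) * (1 - q * s / r * X)
        * (1 - q * r / s * X)) / ((1 - X ^ 2) * (1 - q ^ 2 * X ^ 2)) * (K * Jp) +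
      (-((1 - q * r * s * X) * (1 - q * s / r * X) * (1 - q * g / k * X) * (1 - q / (g * k) * X)
          / ((1 - X ^ 2) * (1 - q ^ 2 * X ^ 2))) -
        (1 - q * r * s * X / X / X) * (1 - q * s / r * X / X / X) * (1 - q * g / k * X / X / X)
          * (1 - q / (g * k) * X / X / X) / ((1 - 1 / X ^ 2) * (1 - q ^ 2 / X ^ 2))) * (K * J0) +
      s / k * ((1 - q * g / k / X) * (1 - q * k / g / X) * (1 - q / (g * k) / X)
        * (1 - q * g * k / X)) / ((1 - 1 / X ^ 2) * (1 - q ^ 2 / X ^ 2)) * (K * Jm) =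
      (-1 - q ^ 2 * s ^ 2 / k ^ 2 + q * s / k * (L ^ 2 + 1 / L ^ 2)) * (K * J0) := by
  have d1 : 1 - X ^ 2 ≠ 0 := fun h => hx1 (by linear_combination -h)
  have d2 : X ^ 2 - q ^ 2 ≠ 0 := fun h => hx2 (by linear_combination h)
  have d3 : 1 - q ^ 2 * X ^ 2 ≠ 0 := fun h => hx3 (by
    rw [eq_div_iff (pow_ne_zero 2 hq)]; linear_combination -h)
  have hc : ∀ a : ℂ, a * X / X / X = a * (1 / X) := by intro a; field_simp
  have hden : (1 - 1 / X ^ 2) * (1 - q ^ 2 / X ^ 2)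
      = -((1 - X ^ 2) * (X ^ 2 - q ^ 2)) / X ^ 4 := by field_simp; ring
  rw [hden]
  simp only [hc]
  have hB : s / k * ((1 - q * r * s * X) * (1 - q / (r * s) * X) * (1 - q * s / r * X)
        * (1 - q * r / s * X)) / ((1 - X ^ 2) * (1 - q ^ 2 * X ^ 2)) =
      cB q X s r k / ((1-X^2)*(1-q^2*X^2)*(X^2-q^2)) := by
    unfold cB
    rw [div_eq_div_iff (mul_ne_zero d1 d3) (mul_ne_zero (mul_ne_zero d1 d3) d2)]
    ring
  have hA : (1 - q * r * s * X) * (1 - q * s / r * X) * (1 - q * g / k * X) * (1 - q / (g * k) * X)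
          / ((1 - X ^ 2) * (1 - q ^ 2 * X ^ 2)) =
      cA q X s r k g * (X^2-q^2) / ((1-X^2)*(1-q^2*X^2)*(X^2-q^2)) := by
    unfold cA
    rw [div_eq_div_iff (mul_ne_zero d1 d3) (mul_ne_zero (mul_ne_zero d1 d3) d2)]
    ring
  have hneg : -((1 - X ^ 2) * (X ^ 2 - q ^ 2)) / X ^ 4 ≠ 0 :=
    div_ne_zero (neg_ne_zero.2 (mul_ne_zero d1 d2)) (pow_ne_zero 4 hX)
  have hquot : ∀ a : ℂ, a / (-((1 - X ^ 2) * (X ^ 2 - q ^ 2)) / X ^ 4)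
      = -(a * X ^ 4 * (1-q^2*X^2)) / ((1-X^2)*(1-q^2*X^2)*(X^2-q^2)) := by
    intro a
    rw [div_div_eq_mul_div, div_eq_div_iff (neg_ne_zero.2 (mul_ne_zero d1 d2))
      (mul_ne_zero (mul_ne_zero d1 d3) d2)]
    ring
  rw [hB, hA, hquot, hquot]
  have hΔ : (1-X^2)*(1-q^2*X^2)*(X^2-q^2) ≠ 0 := mul_ne_zero (mul_ne_zero d1 d3) d2
  refine fin_abs _ _ _ _ _ _ _ _ _ _ hΔ ?_
  rw [neg_mul (cA q X s r k g)] at key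
  exact key
/-- The matrix coefficient `φ_λ` is analytic on the strip `|Re x| ≤ 2` and satisfies
the second order difference equation `B(x)φ_λ(x+2) + C(x)φ_λ(x) + D(x)φ_λ(x−2) =
E(λ;β)·φ_λ(x)` for generic `x ∈ iℝ`. -/
theorem phiMat_eigenfunction (t : ℝ) (ht : 0 < t) (τ : ℂ) (hτ : τ = Complex.I * (t : ℂ))
    (lam : ℝ) (m n : ℤ) (hm : 0 < m) (hn : 0 < n) (α β : ℂ)
    (hα : α = 2 * (m : ℂ)) (hβ : β = 2 * (n : ℂ))
    (ρ σ : ℝ) (hρ : 3 ≤ ρ) (hσ : 3 ≤ σ) (a b c d : ℂ)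
    (ha : a = 1 + (ρ : ℂ) + (σ : ℂ)) (hb : b = 1 - (ρ : ℂ) + (σ : ℂ))
    (hc : c = 1 + α + (ρ : ℂ) - β - (σ : ℂ)) (hd : d = 1 - α - (ρ : ℂ) - β - (σ : ℂ)) :
    (∀ x : ℂ, |x.re| ≤ 2 →
      AnalyticAt ℂ (phiMat τ (lam : ℂ) α (ρ : ℂ) β (σ : ℂ)) x) ∧
    (∀ x : ℂ, x.re = 0 → qpow τ (2 * x) ≠ 1 → qpow τ (2 * x) ≠ qpow τ 2 →
      qpow τ (2 * x) ≠ qpow τ (-2) →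
      coefB τ β a b x * phiMat τ (lam : ℂ) α (ρ : ℂ) β (σ : ℂ) (x + 2) +
          (-awA τ a b c d x - awA τ a b c d (-x)) *
            phiMat τ (lam : ℂ) α (ρ : ℂ) β (σ : ℂ) x +
          coefD τ β c d x * phiMat τ (lam : ℂ) α (ρ : ℂ) β (σ : ℂ) (x - 2) =
        eigenE τ (lam : ℂ) β * phiMat τ (lam : ℂ) α (ρ : ℂ) β (σ : ℂ) x) := by
  have htc : (t : ℂ) ≠ 0 := by exact_mod_cast ht.ne'
  have hτ0 : τ ≠ 0 := by rw [hτ]; exact mul_ne_zero Complex.I_ne_zero htc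
  have hα2 : 2 ≤ α.re := by
    have h1 : (1 : ℝ) ≤ m := by exact_mod_cast hm
    rw [hα]; simp; linarith
  have hβ2 : 2 ≤ β.re := by
    have h1 : (1 : ℝ) ≤ n := by exact_mod_cast hn
    rw [hβ]; simp; linarith
  have hl : (I * (lam : ℂ)).re = 0 := by simp
  have hρ' : 3 ≤ ((ρ : ℂ)).re := by simpa using hρ
  have hσ' : 3 ≤ ((σ : ℂ)).re := by simpa using hσ
  have hphi : phiMat τ (lam : ℂ) α (ρ : ℂ) β (σ : ℂ) = fun x =>
      KK τ (I * lam) α ρ β σ * ∫ y in (0 : ℝ)..1,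
        FF τ (I * lam) β σ (x + (y : ℂ) / τ) * HH τ (I * lam) α ρ ((y : ℂ) / τ) := by
    funext x
    exact phiMat_eq hτ0 _ _ _ _ _ _
  have hre : ∀ y : ℝ, ((y : ℂ) / τ).re = 0 := by
    intro w
    have : (w : ℂ) / τ = ((w / t : ℝ) : ℂ) * -I := by
      rw [hτ]; push_cast; field_simp; linear_combination w * Complex.I_mul_I
    rw [this, Complex.re_ofReal_mul]
    simp
  refine ⟨?_, ?_⟩
  · intro x hx
    have hxs : x ∈ strip3 := by
      have := abs_le.1 hx
      simp only [strip3, Set.mem_ofPred_eq]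
      constructor <;> linarith
    have hd : DifferentiableOn ℂ (phiMat τ (lam : ℂ) α (ρ : ℂ) β (σ : ℂ)) strip3 := by
      rw [hphi]
      refine DifferentiableOn.const_mul (integral_param_diff (FF τ (I * lam) β σ)
        (fun y => HH τ (I * lam) α ρ ((y : ℂ) / τ)) (fun y => (y : ℂ) / τ) ?_ ?_ (by fun_prop) hre) _
      · rintro u ⟨h1, h2⟩
        apply DifferentiableAt.differentiableWithinAt
        refine FF_diff ht hτ _ _ _ _ ?_ ?_ <;> simp <;> linarith
      · rw [continuous_iff_continuousAt]
        intro y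
        have c2 : ContinuousAt (HH τ (I * lam) α ρ) ((y : ℂ) / τ) := by
          refine (HH_diff ht hτ _ _ _ _ ?_ ?_).continuousAt <;>
            simp only [Complex.add_re, Complex.sub_re, hre, hl, Complex.one_re] <;> linarith
        exact ContinuousAt.comp (f := fun y : ℝ => (y : ℂ) / τ) c2 (by fun_prop)
    exact hd.analyticAt (strip3_open.mem_nhds hxs)
  · intro x hx hx1 hx2 hx3
    rw [hphi]
    beta_reduce
    have key := main_integral ht hτ (I * lam) ρ σ x m n α β hα hβ hα2 hβ2 hl hρ' hσ' hx
      (fun x => ∫ y in (0 : ℝ)..1,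
        FF τ (I * lam) β σ (x + (y : ℂ) / τ) * HH τ (I * lam) α ρ ((y : ℂ) / τ)) (fun _ => rfl)
      (qpow τ 1) (qpow τ x) (qpow τ σ) (qpow τ ρ) (qpow τ (β + σ)) (qpow τ (α + ρ))
      (qpow τ (I * lam)) rfl rfl rfl rfl rfl rfl rfl
    rw [alg3 _ _ _ _ _ _ _ (qpow_ne _ _) (qpow_ne _ _) (qpow_ne _ _) (qpow_ne _ _) (qpow_ne _ _)
      (qpow_ne _ _) (qpow_ne _ _)] at key
    beta_reduce at key
    generalize (∫ y in (0 : ℝ)..1, FF τ (I * lam) β σ (x + 2 + (y : ℂ) / τ) *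
      HH τ (I * lam) α ρ ((y : ℂ) / τ)) = Jp at key ⊢
    generalize (∫ y in (0 : ℝ)..1, FF τ (I * lam) β σ (x - 2 + (y : ℂ) / τ) *
      HH τ (I * lam) α ρ ((y : ℂ) / τ)) = Jm at key ⊢
    generalize (∫ y in (0 : ℝ)..1, FF τ (I * lam) β σ (x + (y : ℂ) / τ) *
      HH τ (I * lam) α ρ ((y : ℂ) / τ)) = J0 at key ⊢
    generalize KK τ (I * lam) α ρ β σ = K
    have cv : qpow τ (2 * x) = qpow τ x ^ 2 ∧ qpow τ 2 = qpow τ 1 ^ 2 ∧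
        qpow τ (2 + 2 * x) = qpow τ 1 ^ 2 * qpow τ x ^ 2 ∧
        qpow τ (a + x) = qpow τ 1 * qpow τ ρ * qpow τ σ * qpow τ x ∧
        qpow τ (2 - a + x) = qpow τ 1 / (qpow τ ρ * qpow τ σ) * qpow τ x ∧
        qpow τ (b + x) = qpow τ 1 * qpow τ σ / qpow τ ρ * qpow τ x ∧
        qpow τ (2 - b + x) = qpow τ 1 * qpow τ ρ / qpow τ σ * qpow τ x ∧
        qpow τ (c + x) = qpow τ 1 * qpow τ (α + ρ) / qpow τ (β + σ) * qpow τ x ∧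
        qpow τ (c - x) = qpow τ 1 * qpow τ (α + ρ) / qpow τ (β + σ) / qpow τ x ∧
        qpow τ (2 - c - x) = qpow τ 1 * qpow τ (β + σ) / qpow τ (α + ρ) / qpow τ x ∧
        qpow τ (2 - d - x) = qpow τ 1 * qpow τ (α + ρ) * qpow τ (β + σ) / qpow τ x ∧
        qpow τ (-β) = qpow τ σ / qpow τ (β + σ) ∧
        qpow τ (2 - 2 * β) = qpow τ 1 ^ 2 * qpow τ σ ^ 2 / qpow τ (β + σ) ^ 2 ∧
        qpow τ (1 - β) = qpow τ 1 * qpow τ σ / qpow τ (β + σ) ∧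
        qpow τ (2 * I * lam) = qpow τ (I * lam) ^ 2 ∧
        qpow τ (d - x) = qpow τ 1 / (qpow τ (α + ρ) * qpow τ (β + σ)) / qpow τ x ∧
        qpow τ (d + x) = qpow τ 1 / (qpow τ (α + ρ) * qpow τ (β + σ)) * qpow τ x := by
      subst ha hb hc hd
      refine ⟨?_, ?_, ?_, ?_, ?_, ?_, ?_, ?_, ?_, ?_, ?_, ?_, ?_, ?_, ?_, ?_, ?_⟩ <;>
      · simp only [qpow, ← Complex.exp_nat_mul, ← Complex.exp_add, ← Complex.exp_sub]
        congr 1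
        push_cast
        ring
    have cw : qpow τ (-2) = 1 / qpow τ 1 ^ 2 ∧ qpow τ (-x) = 1 / qpow τ x ∧
        qpow τ (-(2 * x)) = 1 / qpow τ x ^ 2 ∧ qpow τ (2 - 2 * x) = qpow τ 1 ^ 2 / qpow τ x ^ 2 ∧
        qpow τ (-(2 * I * lam)) = 1 / qpow τ (I * lam) ^ 2 := by
      refine ⟨?_, ?_, ?_, ?_, ?_⟩ <;>
      · simp only [qpow, ← Complex.exp_nat_mul, ← Complex.exp_add, ← Complex.exp_sub, one_div,
          ← Complex.exp_neg]
        congr 1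
        push_cast
        ring
    obtain ⟨v1, v2, v3, v4, v5, v6, v7, v8, v9, v10, v11, v12, v13, v14, v15, v16, v17⟩ := cv
    obtain ⟨w1, w2, w3, w4, w5⟩ := cw
    have hmx : ∀ u : ℂ, qpow τ (u + -x) = qpow τ (u + x) / qpow τ x / qpow τ x := by
      intro u
      simp only [qpow, ← Complex.exp_sub]
      congr 1
      ring
    have hq := qpow_ne τ 1
    have hX := qpow_ne τ x
    have hs := qpow_ne τ σ
    have hr := qpow_ne τ ρ
    have hk := qpow_ne τ (β + σ)
    have hg := qpow_ne τ (α + ρ)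
    have hL := qpow_ne τ (I * lam)
    rw [v1] at hx1 hx2 hx3
    rw [v2] at hx2
    rw [w1] at hx3
    have w6 : qpow τ (2 * -x) = 1 / qpow τ x ^ 2 := by rw [← w3]; congr 1; ring
    have w7 : qpow τ (2 + 2 * -x) = qpow τ 1 ^ 2 / qpow τ x ^ 2 := by rw [← w4]; congr 1; ring
    unfold coefB coefD awA eigenE
    rw [w6, w7]
    simp only [hmx]
    rw [v1, v3, v4, v5, v6, v7, v8, v9, v10, v11, v12, v13, v14, v15, v16, v17, w3, w4, w5]
    clear v1 v2 v3 v4 v5 v6 v7 v8 v9 v10 v11 v12 v13 v14 v15 v16 v17 w1 w2 w3 w4 w5 w6 w7 hmx hphi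
    generalize qpow τ 1 = q at *
    generalize qpow τ x = X at *
    generalize qpow τ σ = s at *
    generalize qpow τ ρ = r at *
    generalize qpow τ (β + σ) = k at *
    generalize qpow τ (α + ρ) = g at *
    generalize qpow τ (I * lam) = L at *
    exact final_alg q X s r k g L Jp J0 Jm K hq hX hs hr hk hg hL hx1 hx2 hx3 key
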